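/- arXiv:1404.6487 — 2 statements merged into one kernel-verified Lean document; each statement's English description precedes it below -/
import Mathlib

section
/- Let (X,d) be a metric space, let α : ℕ → X have dense range, let A₁,…,A_n be compact nonempty subsets of X, and let ε > 0. Then there exist finite families F₁,…,F_n, where each F_p is a nonempty finite set of pairs (x,r) with x in the range of α and r a positive rational number with r < ε, such that: (a) for each p, A_p ⊆ ⋃_{(x,r)∈F_p} B(x,r) and B(x,r) ∩ A_p ≠ ∅ for every (x,r) ∈ F_p; and (b) for all p,q ∈ {1,…,n} with A_p ∩ A_q = ∅ and all (x,r) ∈ F_p, (y,s) ∈ F_q, one has d(x,y) > r + s. -/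
open Metric Set

/-- A compact set is covered by finitely many balls of a given radius `r`, centered in a given
dense set and all meeting the compact set. -/
theorem IsCompact.exists_finite_ball_cover_of_dense {X : Type*} [PseudoMetricSpace X]
    {K D : Set X} (hK : IsCompact K) (hD : Dense D) {r : ℝ} (hr : 0 < r) :
    ∃ t ⊆ D, t.Finite ∧ K ⊆ ⋃ x ∈ t, ball x r ∧ ∀ x ∈ t, (ball x r ∩ K).Nonempty := by
  obtain ⟨t, hts, htf, hKt⟩ := hK.elim_finite_subcover_image
    (b := {x | x ∈ D ∧ (ball x r ∩ K).Nonempty}) (c := fun x => ball x r)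
    (fun _ _ => isOpen_ball) (by
      intro a ha
      obtain ⟨x, hxD, hx⟩ := hD.exists_dist_lt a hr
      exact mem_biUnion (x := x) ⟨hxD, a, hx, ha⟩ hx)
  exact ⟨t, fun x hx => (hts hx).1, htf, hKt, fun x hx => (hts hx).2⟩

/-- Finitely many compact sets admit a common positive lower bound for the distances between
points of disjoint members. -/
theorem exists_pos_forall_disjoint_lt_dist {X ι : Type*} [MetricSpace X] [Finite ι]
    {A : ι → Set X} (hA : ∀ p, IsCompact (A p)) :
    ∃ δ : ℝ, 0 < δ ∧ ∀ p q, Disjoint (A p) (A q) → ∀ a ∈ A p, ∀ b ∈ A q, δ < dist a b := by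
  have key : ∀ p q, ∀ᶠ δ : ℝ in nhdsWithin 0 (Ioi 0),
      Disjoint (A p) (A q) → ∀ a ∈ A p, ∀ b ∈ A q, δ < dist a b := by
    intro p q
    by_cases hpq : Disjoint (A p) (A q)
    · obtain ⟨r, hr, h⟩ := exists_pos_forall_lt_edist (hA p) (hA q).isClosed hpq
      filter_upwards [Ioo_mem_nhdsGT (NNReal.coe_pos.2 hr)] with δ hδ _ a ha b hb
      have hab := h a ha b hb
      rw [edist_nndist, ENNReal.coe_lt_coe] at hab
      exact hδ.2.trans (NNReal.coe_lt_coe.2 hab)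
    · exact .of_forall fun _ h => absurd h hpq
  obtain ⟨δ, h, hδ⟩ := ((Filter.eventually_all.2 fun p => Filter.eventually_all.2 (key p)).and
    self_mem_nhdsWithin).exists
  exact ⟨δ, hδ, h⟩

/-- **Lemma (effective links).** Given compact nonempty sets `A₁, …, A_n` and
`ε > 0`, there are finite nonempty families `F₁, …, F_n` of rational balls with
radii `< ε` centered at points of the dense sequence such that `F_p` covers `A_p`,
every ball of `F_p` meets `A_p`, and balls of `F_p` and `F_q` are formally
disjoint whenever `A_p ∩ A_q = ∅`. -/
theorem effective_links {X : Type*} [MetricSpace X] (α : ℕ → X)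
    (hα : DenseRange α) (n : ℕ) (A : Fin n → Set X)
    (hA : ∀ p, IsCompact (A p)) (hAne : ∀ p, (A p).Nonempty)
    (ε : ℝ) (hε : 0 < ε) :
    ∃ F : Fin n → Set (X × ℚ),
      (∀ p, (F p).Finite ∧ (F p).Nonempty) ∧
      (∀ p, ∀ pr ∈ F p, pr.1 ∈ range α ∧ 0 < pr.2 ∧ (pr.2 : ℝ) < ε) ∧
      (∀ p, A p ⊆ ⋃ pr ∈ F p, ball pr.1 ((pr.2 : ℝ))) ∧
      (∀ p, ∀ pr ∈ F p, (ball pr.1 ((pr.2 : ℝ)) ∩ A p).Nonempty) ∧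
      (∀ p q, A p ∩ A q = ∅ → ∀ pr ∈ F p, ∀ qr ∈ F q,
        dist pr.1 qr.1 > (pr.2 : ℝ) + (qr.2 : ℝ)) := by
  obtain ⟨δ, hδ, hsep⟩ := exists_pos_forall_disjoint_lt_dist hA
  obtain ⟨r, hr, hrlt⟩ := exists_rat_btwn (lt_min hε (by positivity : 0 < δ / 4))
  have hrε : (r : ℝ) < ε := hrlt.trans_le (min_le_left _ _)
  have hrδ : (r : ℝ) < δ / 4 := hrlt.trans_le (min_le_right _ _)
  choose t htα htf hcov hmeet using fun p => (hA p).exists_finite_ball_cover_of_dense hα hr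
  refine ⟨fun p => (fun x => (x, r)) '' t p, fun p => ⟨(htf p).image _, ?_⟩, ?_, ?_, ?_, ?_⟩
  · obtain ⟨a, ha⟩ := hAne p
    obtain ⟨x, hx, -⟩ := mem_iUnion₂.1 (hcov p ha)
    exact ⟨_, mem_image_of_mem _ hx⟩
  · rintro p _ ⟨x, hx, rfl⟩
    exact ⟨htα p hx, Rat.cast_pos.1 hr, hrε⟩
  · intro p
    rw [biUnion_image]
    exact hcov p
  · rintro p _ ⟨x, hx, rfl⟩
    exact hmeet p x hx
  · rintro p q hpq _ ⟨x, hx, rfl⟩ _ ⟨y, hy, rfl⟩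
    obtain ⟨a, hax, ha⟩ := hmeet p x hx
    obtain ⟨b, hby, hb⟩ := hmeet q y hy
    have hab := hsep p q (disjoint_iff_inter_eq_empty.2 hpq) a ha b hb
    have htri := dist_triangle4 a x y b
    rw [mem_ball] at hax hby
    rw [dist_comm y b] at htri
    dsimp only
    linarith
end

section
/- Let (X,d) be a metric space, let α : ℕ → X have dense range, let r > 0, let f : [0,r] → X be a continuous injection, and let ε > 0. Then there exists n₀ ∈ ℕ, n₀ ≥ 1, such that for each n ≥ n₀ there exist nonempty finite families F₀,…,F_{n−1} of pairs (x,ρ), with x in the range of α and ρ a positive rational number, such that: (1) for each i ∈ {0,…,n−1}, f([ (i/n)r, ((i+1)/n)r ]) ⊆ ⋃_{(x,ρ)∈F_i} B(x,ρ), and for every (x,ρ) ∈ F_i one has ρ < ε and B(x,ρ) ∩ f([ (i/n)r, ((i+1)/n)r ]) ≠ ∅; (2) for all i,i' ∈ {0,…,n−1} with |i−i'| > 1 and all (x,ρ) ∈ F_i, (y,σ) ∈ F_{i'}, one has d(x,y) > ρ + σ; (3) for each i ∈ {0,…,n−1}, the formal diameter of F_i, namely max_{(x,ρ),(y,σ)∈F_i}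 d(x,y) + 2·max_{(x,ρ)∈F_i} ρ, is less than ε. -/
open Metric Set

/-- A compact set is covered by finitely many balls of a given radius, centered in the range of a
dense family and each meeting the set. -/
lemma IsCompact.exists_finite_dense_ball_cover {X ι : Type*} [PseudoMetricSpace X] {α : ι → X}
    (hα : DenseRange α) {K : Set X} (hK : IsCompact K) {q : ℝ} (hq : 0 < q) :
    ∃ T : Set X, T.Finite ∧ (∀ x ∈ T, x ∈ range α ∧ (ball x q ∩ K).Nonempty) ∧
      K ⊆ ⋃ x ∈ T, ball x q := by
  have hcover : K ⊆ ⋃ x ∈ {x | x ∈ range α ∧ (ball x q ∩ K).Nonempty}, ball x q := by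
    intro y hy
    obtain ⟨k, hk⟩ := hα.exists_dist_lt y hq
    exact mem_biUnion ⟨mem_range_self k, y, hk, hy⟩ hk
  obtain ⟨T, hT, hfin, hKT⟩ := hK.elim_finite_subcover_image (fun _ _ => isOpen_ball) hcover
  exact ⟨T, hfin, hT, hKT⟩

/-- A continuous injection on a compact set keeps points at distance at least `c > 0` uniformly
apart. -/
lemma IsCompact.exists_pos_le_dist_of_injOn {X Y : Type*} [PseudoMetricSpace Y] [MetricSpace X]
    {f : Y → X} {K : Set Y} (hK : IsCompact K) (hf : ContinuousOn f K) (hinj : InjOn f K)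
    {c : ℝ} (hc : 0 < c) :
    ∃ η > 0, ∀ s ∈ K, ∀ t ∈ K, c ≤ dist s t → η ≤ dist (f s) (f t) := by
  have hS : IsCompact ((K ×ˢ K) ∩ {p : Y × Y | c ≤ dist p.1 p.2}) :=
    (hK.prod hK).inter_right (isClosed_le continuous_const continuous_dist)
  have hcont : ContinuousOn (fun p : Y × Y => dist (f p.1) (f p.2))
      ((K ×ˢ K) ∩ {p : Y × Y | c ≤ dist p.1 p.2}) :=
    continuous_dist.comp_continuousOn
      ((hf.comp continuousOn_fst fun p hp => hp.1.1).prodMk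
        (hf.comp continuousOn_snd fun p hp => hp.1.2))
  obtain ⟨η, hη, hle⟩ := hS.exists_forall_le' hcont (a := 0) fun p hp => by
    refine dist_pos.2 fun h => ?_
    have hp2 : c ≤ dist p.1 p.2 := hp.2
    rw [hinj hp.1.1 hp.1.2 h, dist_self] at hp2
    exact hc.not_ge hp2
  exact ⟨η, hη, fun s hs t ht hst => hle (s, t) ⟨⟨hs, ht⟩, hst⟩⟩

/-- **Proposition (chains along an arc).** Let `f` be a continuous injection on
`[0,r]` and `ε > 0`. Then there is `n₀ ≥ 1` such that for each `n ≥ n₀` there are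
finite nonempty families `F₀, …, F_{n-1}` of rational balls centered at points of
the dense sequence with radii `< ε` such that: (1) `F_i` covers
`f([ (i/n)r, ((i+1)/n)r ])` and each of its balls meets this set; (2) balls of
`F_i` and `F_{i'}` are formally disjoint whenever `|i - i'| > 1`; (3) the formal
diameter of each `F_i` is `< ε`. -/
theorem arc_formal_chains {X : Type*} [MetricSpace X] (α : ℕ → X)
    (hα : DenseRange α) (r : ℝ) (hr : 0 < r) (f : ℝ → X)
    (hf : ContinuousOn f (Icc 0 r)) (hinj : InjOn f (Icc 0 r))
    (ε : ℝ) (hε : 0 < ε) :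
    ∃ n₀ : ℕ, 1 ≤ n₀ ∧ ∀ n : ℕ, n₀ ≤ n →
      ∃ F : Fin n → Set (X × ℚ),
        (∀ i, (F i).Finite ∧ (F i).Nonempty) ∧
        (∀ i : Fin n, ∀ pr ∈ F i,
          pr.1 ∈ range α ∧ 0 < pr.2 ∧ (pr.2 : ℝ) < ε ∧
          (ball pr.1 ((pr.2 : ℝ)) ∩
            f '' Icc ((i : ℝ) / n * r) (((i : ℝ) + 1) / n * r)).Nonempty) ∧
        (∀ i : Fin n, f '' Icc ((i : ℝ) / n * r) (((i : ℝ) + 1) / n * r) ⊆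
          ⋃ pr ∈ F i, ball pr.1 ((pr.2 : ℝ))) ∧
        (∀ i i' : Fin n, ((i : ℕ) + 1 < (i' : ℕ) ∨ (i' : ℕ) + 1 < (i : ℕ)) →
          ∀ pr ∈ F i, ∀ qr ∈ F i',
            dist pr.1 qr.1 > (pr.2 : ℝ) + (qr.2 : ℝ)) ∧
        (∀ i : Fin n, ∀ pr ∈ F i, ∀ qr ∈ F i, ∀ sr ∈ F i,
          dist pr.1 qr.1 + 2 * (sr.2 : ℝ) < ε) := by
  obtain ⟨δ, hδ, hfδ⟩ := Metric.uniformContinuousOn_iff.1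
    (isCompact_Icc.uniformContinuousOn_of_continuous hf) (ε / 2) (by positivity)
  obtain ⟨m, hm⟩ := exists_nat_gt (r / δ)
  refine ⟨m + 1, by omega, fun n hn => ?_⟩
  have hmn : (m : ℝ) + 1 ≤ n := by exact_mod_cast hn
  have hn0 : (0 : ℝ) < n := by linarith [Nat.cast_nonneg (α := ℝ) m]
  have hmesh : r / n < δ := by
    rw [div_lt_iff₀ hδ] at hm
    rw [div_lt_iff₀ hn0]
    nlinarith
  have hmesh0 : 0 < r / n := by positivity
  obtain ⟨η, hη, hfη⟩ := isCompact_Icc.exists_pos_le_dist_of_injOn hf hinj hmesh0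
  obtain ⟨q, hq0, hq⟩ := exists_rat_btwn (show (0 : ℝ) < min (ε / 8) (η / 4) by positivity)
  obtain ⟨hqε, hqη⟩ := lt_min_iff.1 hq
  have hend : ∀ x : ℝ, x / n * r = x * (r / n) := fun x => by ring
  simp only [hend]
  have hsub : ∀ i : Fin n, Icc ((i : ℝ) * (r / n)) (((i : ℝ) + 1) * (r / n)) ⊆ Icc 0 r := by
    intro i
    have hi : (i : ℝ) + 1 ≤ n := by exact_mod_cast i.2
    refine Icc_subset_Icc (by positivity) ?_
    calc ((i : ℝ) + 1) * (r / n) ≤ n * (r / n) := by gcongr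
      _ = r := by field_simp
  choose T hTfin hT hTcover using fun i : Fin n =>
    (isCompact_Icc.image_of_continuousOn (hf.mono (hsub i))).exists_finite_dense_ball_cover hα hq0
  have hsep : ∀ i j : Fin n, (i : ℕ) + 1 < j → ∀ x ∈ T i, ∀ y ∈ T j, (q : ℝ) + q < dist x y := by
    intro i j hij x hx y hy
    obtain ⟨-, _, hxs, s, hs, rfl⟩ := hT i x hx
    obtain ⟨-, _, hyt, t, ht, rfl⟩ := hT j y hy
    have hij' : (i : ℝ) + 1 + 1 ≤ j := by exact_mod_cast hij
    have hst : r / n ≤ dist s t := by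
      rw [dist_comm, Real.dist_eq]
      refine le_trans ?_ (le_abs_self _)
      nlinarith [hs.2, ht.1]
    have := hfη s (hsub i hs) t (hsub j ht) hst
    rw [mem_ball] at hxs hyt
    linarith [dist_triangle4 (f s) x y (f t), dist_comm y (f t)]
  refine ⟨fun i => (fun x => (x, q)) '' T i, fun i => ⟨(hTfin i).image _, ?_⟩, ?_, ?_, ?_, ?_⟩
  · obtain ⟨x, hx, -⟩ := mem_iUnion₂.1 (hTcover i
      (mem_image_of_mem f (left_mem_Icc.2 (by gcongr; linarith))))
    exact ⟨_, mem_image_of_mem _ hx⟩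
  · rintro i _ ⟨x, hx, rfl⟩
    exact ⟨(hT i x hx).1, by exact_mod_cast hq0, by dsimp only; linarith, (hT i x hx).2⟩
  · intro i
    rw [biUnion_image]
    exact hTcover i
  · rintro i j (hij | hij) _ ⟨x, hx, rfl⟩ _ ⟨y, hy, rfl⟩
    · exact hsep i j hij x hx y hy
    · rw [dist_comm]
      exact hsep j i hij y hy x hx
  · rintro i _ ⟨x, hx, rfl⟩ _ ⟨y, hy, rfl⟩ _ ⟨_, -, rfl⟩
    obtain ⟨-, _, hxs, s, hs, rfl⟩ := hT i x hx
    obtain ⟨-, _, hyt, t, ht, rfl⟩ := hT i y hy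
    have hst : dist s t < δ := by
      refine (Real.dist_le_of_mem_Icc hs ht).trans_lt ?_
      linarith
    have := hfδ s (hsub i hs) t (hsub i ht) hst
    rw [mem_ball, dist_comm] at hxs
    rw [mem_ball] at hyt
    dsimp only
    linarith [dist_triangle4 x (f s) (f t) y]
end
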